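/- arXiv:2305.12869 — 2 statements merged into one kernel-verified Lean document; each statement's English description precedes it below -/
import Mathlib

section
/- Let A be a transposed Poisson algebra. Then for all x₁, x₂, x₃, x₄ ∈ A, [x₁,x₃]⋅(x₂⋅x₄) = [x₁, x₂⋅(x₃⋅x₄)] + 3(x₁⋅([x₂,x₄]⋅x₃)) − 2(x₁⋅[x₂, x₃⋅x₄]) − 2(x₁⋅(x₂⋅[x₃,x₄])). -/
/-!
Write `xy` for the commutative product. The transposed Leibniz rule and antisymmetry give
`2[x,y]zw = [x,yzw] - [y,xzw]`. Multiplying the rule by `z` and then by `w`, instead of by `zw` at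
once, also gives `2[x,y]zw = [xz,yw] + [xw,yz]`. Comparing the latter formula for `2[x,z]yw` and for
`2[y,w]xz`, and cancelling `2`, yields `[x,z]yw = [y,w]xz + [xw,yz]`. Without any further division,
`[xw,yz] = [x,yzw] + 2x[y,w]z - 2x[y,zw] - 2xy[z,w]`, and the sum of the two is the claim.
-/

section TransposedLeibniz

variable {R A : Type*} [CommSemiring R] [AddCommGroup A] [Module R A]

/-- The compatibility condition between the product and the bracket of a transposed Poisson algebra.
The two operations are arbitrary bilinear maps here; their other axioms are stated separately. -/
def IsTransposedLeibniz (mul br : A →ₗ[R] A →ₗ[R] A) : Prop :=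
  ∀ x y z : A, 2 • mul (br x y) z = br (mul x z) y + br x (mul y z)

namespace IsTransposedLeibniz

variable {mul br : A →ₗ[R] A →ₗ[R] A}

theorem br_mul_mul_add_br_mul_mul (htp : IsTransposedLeibniz mul br)
    (hmul_assoc : ∀ x y z : A, mul (mul x y) z = mul x (mul y z)) (x y z w : A) :
    br (mul x (mul z w)) y + br x (mul y (mul z w)) =
      br (mul x z) (mul y w) + br (mul x w) (mul y z) := by
  have at_once : 2 • mul (mul (br x y) z) w =
      br (mul x (mul z w)) y + br x (mul y (mul z w)) := by
    rw [hmul_assoc, htp]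
  have one_by_one : 2 • (2 • mul (mul (br x y) z) w) =
      (br (mul x (mul z w)) y + br (mul x z) (mul y w)) +
        (br (mul x w) (mul y z) + br x (mul y (mul z w))) :=
    calc 2 • (2 • mul (mul (br x y) z) w)
        = 2 • mul (2 • mul (br x y) z) w := by rw [map_nsmul, LinearMap.smul_apply]
      _ = 2 • mul (br (mul x z) y) w + 2 • mul (br x (mul y z)) w := by
          rw [htp x y z, map_add, LinearMap.add_apply, smul_add]
      _ = _ := by simp only [htp _ _ w, hmul_assoc]
  rw [at_once] at one_by_one
  linear_combination (norm := module) one_by_one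

theorem two_nsmul_mul_br_mul_eq_add (htp : IsTransposedLeibniz mul br)
    (hmul_assoc : ∀ x y z : A, mul (mul x y) z = mul x (mul y z)) (x y z w : A) :
    2 • mul (br x y) (mul z w) = br (mul x z) (mul y w) + br (mul x w) (mul y z) :=
  (htp x y (mul z w)).trans (htp.br_mul_mul_add_br_mul_mul hmul_assoc x y z w)

theorem two_nsmul_mul_br_eq_sub (htp : IsTransposedLeibniz mul br)
    (hbr_anti : ∀ x y : A, br x y = -br y x) (x y z : A) :
    2 • mul (br x y) z = br x (mul y z) - br y (mul x z) := by
  rw [htp, hbr_anti (mul x z) y, neg_add_eq_sub]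

theorem mul_br_mul_swap (htp : IsTransposedLeibniz mul br)
    (two_regular : IsSMulRegular A (2 : ℕ))
    (hmul_comm : ∀ x y : A, mul x y = mul y x)
    (hmul_assoc : ∀ x y z : A, mul (mul x y) z = mul x (mul y z))
    (hbr_anti : ∀ x y : A, br x y = -br y x) (x y z w : A) :
    mul (br x z) (mul y w) = mul (br y w) (mul x z) + br (mul x w) (mul y z) := by
  have br_xz : 2 • mul (br x z) (mul y w) =
      br (mul x y) (mul z w) + br (mul x w) (mul y z) := by
    rw [htp.two_nsmul_mul_br_mul_eq_add hmul_assoc, hmul_comm z y]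
  have br_yw : 2 • mul (br y w) (mul x z) =
      br (mul x y) (mul z w) - br (mul x w) (mul y z) := by
    rw [htp.two_nsmul_mul_br_mul_eq_add hmul_assoc, hbr_anti (mul y z), hmul_comm y x,
      hmul_comm w z, hmul_comm w x, sub_eq_add_neg]
  apply two_regular
  linear_combination (norm := module) br_xz - br_yw

theorem br_mul_mul (htp : IsTransposedLeibniz mul br)
    (hmul_comm : ∀ x y : A, mul x y = mul y x)
    (hmul_assoc : ∀ x y z : A, mul (mul x y) z = mul x (mul y z))
    (hbr_anti : ∀ x y : A, br x y = -br y x) (x y z w : A) :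
    br (mul x w) (mul y z) =
      br x (mul y (mul z w)) + 2 • mul x (mul (br y w) z)
      - 2 • mul x (br y (mul z w)) - 2 • mul x (mul y (br z w)) := by
  have mul_left_comm (a b c : A) : mul a (mul b c) = mul b (mul a c) := by
    rw [← hmul_assoc, hmul_comm a b, hmul_assoc]
  have br_xz : br (mul x y) (mul z w) + br (mul x w) (mul y z) =
      br x (mul y (mul z w)) - br z (mul x (mul y w)) := by
    rw [hmul_comm y z, ← htp.two_nsmul_mul_br_mul_eq_add hmul_assoc,
      htp.two_nsmul_mul_br_eq_sub hbr_anti, mul_left_comm z y]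
  have br_yw : 2 • mul x (mul (br y w) z) =
      br y (mul x (mul z w)) - br w (mul x (mul y z)) := by
    rw [mul_left_comm x, htp.two_nsmul_mul_br_eq_sub hbr_anti, mul_left_comm w, hmul_comm w z,
      mul_left_comm y]
  have br_zw : 2 • mul x (mul y (br z w)) =
      br z (mul x (mul y w)) - br w (mul x (mul y z)) := by
    rw [← hmul_assoc, hmul_comm _ (br z w), htp.two_nsmul_mul_br_eq_sub hbr_anti,
      hmul_comm w, hmul_comm z, hmul_assoc, hmul_assoc]
  have br_y_zw : 2 • mul x (br y (mul z w)) =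
      br (mul x y) (mul z w) + br y (mul x (mul z w)) := by
    rw [hmul_comm x, htp, hmul_comm y x, hmul_comm (mul z w) x]
  linear_combination (norm := module) br_xz - br_yw + br_zw + br_y_zw

end IsTransposedLeibniz

theorem stmt_9_general (mul br : A →ₗ[R] A →ₗ[R] A)
    (two_regular : IsSMulRegular A (2 : ℕ))
    (hmul_comm : ∀ x y : A, mul x y = mul y x)
    (hmul_assoc : ∀ x y z : A, mul (mul x y) z = mul x (mul y z))
    (hbr_anti : ∀ x y : A, br x y = -br y x)
    (htp : IsTransposedLeibniz mul br) (x1 x2 x3 x4 : A) :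
    mul (br x1 x3) (mul x2 x4) =
      br x1 (mul x2 (mul x3 x4)) + 3 • mul x1 (mul (br x2 x4) x3)
      - 2 • mul x1 (br x2 (mul x3 x4)) - 2 • mul x1 (mul x2 (br x3 x4)) := by
  have br24 : mul (br x2 x4) (mul x1 x3) = mul x1 (mul (br x2 x4) x3) := by
    rw [← hmul_assoc, hmul_comm _ x1, hmul_assoc]
  rw [htp.mul_br_mul_swap two_regular hmul_comm hmul_assoc hbr_anti, br24,
    htp.br_mul_mul hmul_comm hmul_assoc hbr_anti]
  module

end TransposedLeibniz

theorem stmt_9 {K A : Type*} [Field K] [CharZero K] [AddCommGroup A] [Module K A]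
    (mul : A →ₗ[K] A →ₗ[K] A) (br : A →ₗ[K] A →ₗ[K] A)
    (hmul_comm : ∀ x y : A, mul x y = mul y x)
    (hmul_assoc : ∀ x y z : A, mul (mul x y) z = mul x (mul y z))
    (hbr_anti : ∀ x y : A, br x y = - br y x)
    (hbr_jacobi : ∀ x y z : A, br (br x y) z + br (br y z) x + br (br z x) y = 0)
    (htp : ∀ x y z : A, 2 • mul (br x y) z = br (mul x z) y + br x (mul y z)) :
    ∀ x1 x2 x3 x4 : A,
      mul (br x1 x3) (mul x2 x4) =
        br x1 (mul x2 (mul x3 x4)) + 3 • mul x1 (mul (br x2 x4) x3)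
        - 2 • mul x1 (br x2 (mul x3 x4)) - 2 • mul x1 (mul x2 (br x3 x4)) := by
  have : IsAddTorsionFree A := .of_isTorsionFree K A
  exact stmt_9_general mul br (nsmul_right_injective two_ne_zero) hmul_comm hmul_assoc hbr_anti htp
end

section
/- Let A be a transposed Poisson algebra. Then for all a₁, a₂, a₃, a₄ ∈ A, [a₁⋅a₂, a₃⋅a₄] = [a₁, a₂⋅a₃⋅a₄] + 4(a₁⋅[a₂,a₄]⋅a₃) − 2(a₁⋅[a₂, a₃⋅a₄]) − 2(a₁⋅a₂⋅[a₃,a₄]), where products of three factors are unambiguous by associativity and commutativity of ⋅. -/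
/-!
Write `xy` for the product and `[x, y]` for the bracket. Expanding `4 [x, w] yz` in two ways, by
absorbing `yz` at once or `y` and `z` one after the other, gives
`[xy, zw] + [xz, yw] = 2 [x, w] yz = [xyz, w] + [x, yzw]`.
The term `[xyz, w]` is symmetric in `x` and `z`, so it cancels from the difference of this identity
and the one with `x` and `z` exchanged; this leaves `[xy, zw] - [zy, xw] = [x, yzw] - [z, xyw]`.
The theorem is this exchange rule after absorbing the outer products into brackets, where one half
of the term with coefficient `4` is expanded in the first way and the other half in the second.
-/

section TransposedLeibniz

variable {A : Type*} [NonUnitalCommRing A]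

/-- The transposed Leibniz rule, relating the bracket of a transposed Poisson algebra to its
product. The bracket `br` is a bare binary operation. -/
def TransposedLeibniz (br : A → A → A) : Prop :=
  ∀ x y z : A, 2 • (br x y * z) = br (x * z) y + br x (y * z)

namespace TransposedLeibniz

variable {br : A → A → A}

theorem bracket_mul_mul_add_bracket_mul_mul (h : TransposedLeibniz br) (x y z w : A) :
    br (x * y) (z * w) + br (x * z) (y * w) = 2 • (br x w * (y * z)) := by
  have absorb_both : 2 • (br x w * (y * z)) = br (x * (y * z)) w + br x (w * (y * z)) :=
    h x w (y * z)
  have absorb_z_then_y : 2 • (2 • (br x w * (y * z))) =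
      br (x * (y * z)) w + br (x * z) (y * w) + (br (x * y) (z * w) + br x (w * (y * z))) :=
    calc 2 • (2 • (br x w * (y * z)))
      _ = 2 • (2 • (br x w * z) * y) := by rw [smul_mul_assoc, mul_assoc, mul_comm z y]
      _ = 2 • (br (x * z) w * y) + 2 • (br x (w * z) * y) := by
        rw [h x w z, add_mul, smul_add]
      _ = br (x * z * y) w + br (x * z) (w * y) + (br (x * y) (w * z) + br x (w * z * y)) := by
        rw [h (x * z) w y, h x (w * z) y]
      _ = _ := by rw [mul_assoc x, mul_assoc w, mul_comm z y, mul_comm w y, mul_comm w z]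
  linear_combination (norm := module) absorb_both - absorb_z_then_y

theorem bracket_mul_mul_sub_bracket_mul_mul (h : TransposedLeibniz br) (x y z w : A) :
    br (x * y) (z * w) - br (z * y) (x * w) = br x (y * z * w) - br z (x * y * w) := by
  have expand (u v : A) : br (u * y) (v * w) + br (u * v) (y * w) =
      br (u * (y * v)) w + br u (w * (y * v)) :=
    (h.bracket_mul_mul_add_bracket_mul_mul u y v w).trans (h u w (y * v))
  have hx := expand x z
  have hz := expand z x
  simp only [mul_comm, mul_left_comm] at hx hz ⊢
  linear_combination (norm := module) hx - hz

end TransposedLeibniz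

theorem stmt_14_general {br : A → A → A} (h : TransposedLeibniz br) (a1 a2 a3 a4 : A) :
    br (a1 * a2) (a3 * a4) =
      br a1 (a2 * a3 * a4) + 4 • (a1 * br a2 a4 * a3)
      - 2 • (a1 * br a2 (a3 * a4)) - 2 • (a1 * a2 * br a3 a4) := by
  have exchange := h.bracket_mul_mul_sub_bracket_mul_mul a1 a2 a3 a4
  have absorb_a1 := h a2 (a3 * a4) a1
  have absorb_a1a2 := h a3 a4 (a1 * a2)
  have absorb_a1a3 := h a2 a4 (a1 * a3)
  have split_a1_a3 := h.bracket_mul_mul_add_bracket_mul_mul a2 a1 a3 a4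
  simp only [mul_comm, mul_left_comm] at exchange absorb_a1 absorb_a1a2 absorb_a1a3 split_a1_a3 ⊢
  linear_combination (norm := module)
    exchange + absorb_a1 + absorb_a1a2 - absorb_a1a3 + split_a1_a3

end TransposedLeibniz

/-- The commutative ring, possibly without a unit, whose product is the commutative associative
bilinear map `mul`. It
transfers identities proved in ring notation to a product given as a bilinear map. -/
abbrev nonUnitalCommRingOfBilinear {R A : Type*} [CommSemiring R] [AddCommGroup A] [Module R A]
    (mul : A →ₗ[R] A →ₗ[R] A) (mul_comm : ∀ x y : A, mul x y = mul y x)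
    (mul_assoc : ∀ x y z : A, mul (mul x y) z = mul x (mul y z)) : NonUnitalCommRing A where
  mul x y := mul x y
  left_distrib x := map_add (mul x)
  right_distrib := mul.map_add₂
  zero_mul := mul.map_zero₂
  mul_zero x := map_zero (mul x)
  mul_assoc := mul_assoc
  mul_comm := mul_comm

theorem stmt_14 {K A : Type*} [Field K] [CharZero K] [AddCommGroup A] [Module K A]
    (mul : A →ₗ[K] A →ₗ[K] A) (br : A →ₗ[K] A →ₗ[K] A)
    (hmul_comm : ∀ x y : A, mul x y = mul y x)
    (hmul_assoc : ∀ x y z : A, mul (mul x y) z = mul x (mul y z))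
    (hbr_anti : ∀ x y : A, br x y = - br y x)
    (hbr_jacobi : ∀ x y z : A, br (br x y) z + br (br y z) x + br (br z x) y = 0)
    (htp : ∀ x y z : A, 2 • mul (br x y) z = br (mul x z) y + br x (mul y z)) :
    ∀ a1 a2 a3 a4 : A,
      br (mul a1 a2) (mul a3 a4) =
        br a1 (mul (mul a2 a3) a4) + 4 • mul (mul a1 (br a2 a4)) a3
        - 2 • mul a1 (br a2 (mul a3 a4)) - 2 • mul (mul a1 a2) (br a3 a4) := by
  let := nonUnitalCommRingOfBilinear mul hmul_comm hmul_assoc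
  exact stmt_14_general (br := fun x y => br x y) htp
end
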